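/- arXiv:2105.12630 — 3 statements merged into one kernel-verified Lean document; each statement's English description precedes it below -/
import Mathlib

section
/- Let G be a compactly generated t.d.l.c. group, let g ∈ G, and let p be a prime dividing the scale s(g). Then every Cayley–Abels graph for G has degree at least p + 1. In particular, if p is the largest prime occurring as a factor of any value of the scale function of G, then md(G) ≥ p + 1. -/
/-- A Cayley–Abels graph for a topological group `G`. -/
def IsCayleyAbels {G V : Type*} [Group G] [TopologicalSpace G]
    (Γ : SimpleGraph V) (ρ : G →* Equiv.Perm V) : Prop :=
  Γ.Connected ∧ (∀ v : V, (Γ.neighborSet v).Finite) ∧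
    (∀ (g : G) (u v : V), Γ.Adj u v → Γ.Adj (ρ g u) (ρ g v)) ∧
    (∀ u v : V, ∃ g : G, ρ g u = v) ∧
    (∀ v : V, IsCompact {g : G | ρ g v = v} ∧ IsOpen {g : G | ρ g v = v})

/-- The conjugate subgroup `g⁻¹ U g`. -/
def conjSubgroup {G : Type*} [Group G] (g : G) (U : Subgroup G) : Subgroup G :=
  U.map (MulAut.conj g⁻¹).toMonoidHom

/-- The scale of `g`: the minimum of the indices `[U : U ∩ g⁻¹Ug]` over all compact open
subgroups `U` of `G`. -/
noncomputable def scaleOf (G : Type*) [Group G] [TopologicalSpace G] (g : G) : ℕ :=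
  sInf {n : ℕ | ∃ U : Subgroup G, IsCompact (U : Set G) ∧ IsOpen (U : Set G) ∧
    n = (conjSubgroup g U).relIndex U}

/-- The stabilizer of a vertex. -/
def stabV {G V : Type*} [Group G] (ρ : G →* Equiv.Perm V) (v : V) : Subgroup G :=
  (MulAction.stabilizer (Equiv.Perm V) v).comap ρ

theorem mem_stabV {G V : Type*} [Group G] (ρ : G →* Equiv.Perm V) (v : V) (g : G) :
    g ∈ stabV ρ v ↔ ρ g v = v := Iff.rfl

theorem stabV_relIndex {G V : Type*} [Group G] (ρ : G →* Equiv.Perm V) (H : Subgroup G) (c : V) :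
    (stabV ρ c).relIndex H = {x : V | ∃ h ∈ H, ρ h c = x}.ncard := by
  have h1 : (stabV ρ c).relIndex H = (MulAction.stabilizer (H.map ρ) c).index := by
    unfold stabV
    rw [Subgroup.relIndex_comap]
    rfl
  rw [h1, MulAction.index_stabilizer]
  congr 1
  ext x
  constructor
  · rintro ⟨⟨_, ⟨h, hh, rfl⟩⟩, rfl⟩
    exact ⟨h, hh, rfl⟩
  · rintro ⟨h, hh, rfl⟩
    exact ⟨⟨ρ h, ⟨h, hh, rfl⟩⟩, rfl⟩

theorem relIndex_ne_zero_of_open {G : Type*} [Group G] [TopologicalSpace G]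
    [IsTopologicalGroup G] (A B : Subgroup G) (hA : IsOpen (A : Set G))
    (hB : IsCompact (B : Set G)) : A.relIndex B ≠ 0 := by
  have : CompactSpace B := isCompact_iff_compactSpace.mp hB
  have ho : IsOpen ((A.subgroupOf B : Subgroup B) : Set B) := hA.preimage continuous_subtype_val
  have := Subgroup.quotient_finite_of_isOpen _ ho
  exact Subgroup.index_ne_zero_of_finite

theorem conj_mono {G : Type*} [Group G] (g : G) {A B : Subgroup G} (h : A ≤ B) :
    conjSubgroup g A ≤ conjSubgroup g B := Subgroup.map_mono h

theorem conj_relIndex {G : Type*} [Group G] (g : G) (A B : Subgroup G) :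
    (conjSubgroup g A).relIndex (conjSubgroup g B) = A.relIndex B :=
  Subgroup.relIndex_map_map_of_injective A B (MulAut.conj g⁻¹).injective

theorem conj_open {G : Type*} [Group G] [TopologicalSpace G] [IsTopologicalGroup G]
    (g : G) (A : Subgroup G) (hA : IsOpen (A : Set G)) : IsOpen (conjSubgroup g A : Set G) := by
  have : (conjSubgroup g A : Set G) = (fun x => g * x * g⁻¹) ⁻¹' A := by
    ext x
    constructor
    · rintro ⟨y, hy, rfl⟩
      simpa [mul_assoc] using hy
    · intro hx
      exact ⟨g * x * g⁻¹, hx, by simp [mul_assoc]⟩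
  rw [this]
  exact hA.preimage (by fun_prop)

theorem conj_normal_le {G : Type*} [Group G] (g : G) (K A : Subgroup G) [hK : K.Normal]
    (h : K ≤ A) : K ≤ conjSubgroup g A := by
  intro x hx
  exact ⟨g * x * g⁻¹, h (hK.conj_mem x hx g), by simp [mul_assoc]⟩

theorem conj_sup_normal {G : Type*} [Group G] (g : G) (K A : Subgroup G) [hK : K.Normal] :
    conjSubgroup g (A ⊔ K) = conjSubgroup g A ⊔ K := by
  have h : conjSubgroup g K = K := by
    apply le_antisymm
    · rintro _ ⟨y, hy, rfl⟩
      simpa using hK.conj_mem y hy g⁻¹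
    · exact conj_normal_le g K K le_rfl
  conv_rhs => rw [← h]
  exact Subgroup.map_sup _ _ _

/-- Iterated intersections. -/
def chainV {G : Type*} [Group G] (g : G) (U : Subgroup G) : ℕ → Subgroup G
  | 0 => U
  | n + 1 => U ⊓ conjSubgroup g (chainV g U n)

theorem chainV_succ_le {G : Type*} [Group G] (g : G) (U : Subgroup G) (n : ℕ) :
    chainV g U (n + 1) ≤ chainV g U n := by
  induction n with
  | zero => exact inf_le_left
  | succ n ih => exact inf_le_inf le_rfl (conj_mono g ih)

theorem chainV_le {G : Type*} [Group G] (g : G) (U : Subgroup G) (n : ℕ) :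
    chainV g U n ≤ U := by
  cases n with
  | zero => exact le_rfl
  | succ n => exact inf_le_left

theorem chainV_open {G : Type*} [Group G] [TopologicalSpace G] [IsTopologicalGroup G]
    (g : G) (U : Subgroup G) (hU : IsOpen (U : Set G)) (n : ℕ) :
    IsOpen (chainV g U n : Set G) := by
  induction n with
  | zero => exact hU
  | succ n ih => exact hU.inter (conj_open g _ ih)

theorem chainV_compact {G : Type*} [Group G] [TopologicalSpace G] [IsTopologicalGroup G]
    (g : G) (U : Subgroup G) (hU : IsOpen (U : Set G)) (hc : IsCompact (U : Set G)) (n : ℕ) :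
    IsCompact (chainV g U n : Set G) :=
  hc.of_isClosed_subset (Subgroup.isClosed_of_isOpen _ (chainV_open g U hU n)) (chainV_le g U n)

theorem normal_le_chainV {G : Type*} [Group G] (g : G) (K U : Subgroup G) [K.Normal]
    (h : K ≤ U) (n : ℕ) : K ≤ chainV g U n := by
  induction n with
  | zero => exact h
  | succ n ih => exact le_inf h (conj_normal_le g K _ ih)

theorem chainV_conj_relIndex {G : Type*} [Group G] (g : G) (U : Subgroup G) (n : ℕ) :
    (conjSubgroup g (chainV g U n)).relIndex (chainV g U n)
      = (chainV g U (n + 1)).relIndex (chainV g U n) := by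
  rw [← Subgroup.inf_relIndex_right, ← Subgroup.inf_relIndex_right (chainV g U (n + 1))]
  congr 1
  rw [inf_eq_left.mpr (chainV_succ_le g U n)]
  apply le_antisymm
  · exact le_inf (inf_le_right.trans (chainV_le g U n)) inf_le_left
  · exact le_inf inf_le_right (chainV_succ_le g U n)

theorem chainV_step {G : Type*} [Group G] [TopologicalSpace G] [IsTopologicalGroup G]
    (g : G) (U : Subgroup G) (hU : IsOpen (U : Set G)) (hc : IsCompact (U : Set G))
    (hmin : (conjSubgroup g U).relIndex U = scaleOf G g) (n : ℕ) :
    (chainV g U (n + 1)).relIndex (chainV g U n) = scaleOf G g := by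
  induction n with
  | zero =>
    rw [← chainV_conj_relIndex]
    exact hmin
  | succ n ih =>
    apply le_antisymm
    · rw [← chainV_conj_relIndex]
      conv_rhs => rw [← ih, ← conj_relIndex g]
      apply Subgroup.relIndex_le_of_le_right
      · exact inf_le_right
      · rw [conj_relIndex]
        exact relIndex_ne_zero_of_open _ _ (chainV_open g U hU _) (chainV_compact g U hU hc _)
    · rw [← chainV_conj_relIndex]
      exact Nat.sInf_le ⟨_, chainV_compact g U hU hc _, chainV_open g U hU _, rfl⟩

theorem chainV_index {G : Type*} [Group G] [TopologicalSpace G] [IsTopologicalGroup G]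
    (g : G) (U : Subgroup G) (hU : IsOpen (U : Set G)) (hc : IsCompact (U : Set G))
    (hmin : (conjSubgroup g U).relIndex U = scaleOf G g) (n : ℕ) :
    (chainV g U n).relIndex U = scaleOf G g ^ n := by
  induction n with
  | zero => simp [chainV]
  | succ n ih =>
    rw [← Subgroup.relIndex_mul_relIndex _ _ _ (chainV_succ_le g U n) (chainV_le g U n), ih,
      chainV_step g U hU hc hmin, pow_succ, mul_comm]

/-- A minimizing subgroup containing a given compact normal kernel. -/
theorem exists_minimizing {G P : Type*} [Group G] [TopologicalSpace G] [IsTopologicalGroup G]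
    [Group P] (ρ : G →* P) (hK : IsCompact (ρ.ker : Set G)) (g : G)
    (hne : ∃ U : Subgroup G, IsCompact (U : Set G) ∧ IsOpen (U : Set G)) :
    ∃ U : Subgroup G, IsCompact (U : Set G) ∧ IsOpen (U : Set G) ∧ ρ.ker ≤ U ∧
      (conjSubgroup g U).relIndex U = scaleOf G g := by
  have hmem : scaleOf G g ∈ {n : ℕ | ∃ U : Subgroup G, IsCompact (U : Set G) ∧
      IsOpen (U : Set G) ∧ n = (conjSubgroup g U).relIndex U} := by
    apply Nat.sInf_mem
    obtain ⟨U, h1, h2⟩ := hne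
    exact ⟨_, U, h1, h2, rfl⟩
  obtain ⟨U, hUc, hUo, hUs⟩ := hmem
  have hc : IsCompact ((U ⊔ ρ.ker : Subgroup G) : Set G) := by
    rw [Subgroup.mul_normal]
    exact hUc.mul hK
  have ho : IsOpen ((U ⊔ ρ.ker : Subgroup G) : Set G) :=
    Subgroup.isOpen_mono le_sup_left hUo
  refine ⟨U ⊔ ρ.ker, hc, ho, le_sup_right, le_antisymm ?_ (Nat.sInf_le ⟨_, hc, ho, rfl⟩)⟩
  rw [conj_sup_normal, ← Subgroup.relIndex_map_map, ← Subgroup.relIndex_comap, hUs]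
  exact Subgroup.relIndex_le_of_le_left (Subgroup.le_comap_map _ _)
    (relIndex_ne_zero_of_open _ _ (conj_open g U hUo) hUc)

theorem good_walk {G V : Type*} [Group G] (Γ : SimpleGraph V) (ρ : G →* Equiv.Perm V)
    (hadj : ∀ (g : G) (u v : V), Γ.Adj u v → Γ.Adj (ρ g u) (ρ g v))
    (hfin : ∀ v : V, (Γ.neighborSet v).Finite)
    (p : ℕ) (hp : p.Prime) (hd : ∀ v : V, (Γ.neighborSet v).ncard ≤ p) (W : Subgroup G)
    {a x : V} (w : Γ.Walk a x) : ∀ (b : V) (H : Subgroup G), Γ.Adj a b → H ≤ W →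
      ¬ p ∣ H.relIndex W → H ≤ stabV ρ a → H ≤ stabV ρ b →
      ∃ H' : Subgroup G, H' ≤ H ∧ ¬ p ∣ H'.relIndex W ∧ H' ≤ stabV ρ x := by
  induction w with
  | nil => intro b H _ _ h1 h2 _; exact ⟨H, le_rfl, h1, h2⟩
  | @cons a c x hac w ih =>
    intro b H hab hHW hH ha hb
    have hidx : ¬ p ∣ (stabV ρ c).relIndex H := by
      rw [stabV_relIndex]
      have hsub0 : {x : V | ∃ h ∈ H, ρ h c = x} ⊆ Γ.neighborSet a := by
        rintro _ ⟨h, hh, rfl⟩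
        have := hadj h a c hac
        rwa [(mem_stabV ρ a h).1 (ha hh)] at this
      have hf := (hfin a).subset hsub0
      have hpos : 0 < {x : V | ∃ h ∈ H, ρ h c = x}.ncard :=
        (Set.ncard_pos hf).2 ⟨c, 1, H.one_mem, by simp⟩
      have hlt : {x : V | ∃ h ∈ H, ρ h c = x}.ncard < p := by
        by_cases hcb : c = b
        · subst hcb
          have : {x : V | ∃ h ∈ H, ρ h c = x} ⊆ {c} := by
            rintro _ ⟨h, hh, rfl⟩
            exact (mem_stabV ρ c h).1 (hb hh)
          have := Set.ncard_le_ncard this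
          rw [Set.ncard_singleton] at this
          exact lt_of_le_of_lt this hp.one_lt
        · refine lt_of_lt_of_le (Set.ncard_lt_ncard ?_ (hfin a)) (hd a)
          refine ⟨hsub0, fun h => ?_⟩
          obtain ⟨h, hh, hhb⟩ := h (show b ∈ Γ.neighborSet a from hab)
          have h2 := (mem_stabV ρ b h).1 (hb hh)
          exact hcb ((ρ h).injective (hhb.trans h2.symm))
      exact Nat.not_dvd_of_pos_of_lt hpos hlt
    have hH2 : ¬ p ∣ (stabV ρ c ⊓ H).relIndex W := by
      rw [← Subgroup.relIndex_mul_relIndex _ _ _ (inf_le_right : stabV ρ c ⊓ H ≤ H) hHW,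
        Subgroup.inf_relIndex_right, hp.dvd_mul]
      exact not_or.2 ⟨hidx, hH⟩
    obtain ⟨H', h1, h2, h3⟩ := ih a (stabV ρ c ⊓ H) hac.symm (inf_le_right.trans hHW) hH2
      inf_le_left (inf_le_right.trans ha)
    exact ⟨H', h1.trans inf_le_right, h2, h3⟩

theorem good_finset {G V : Type*} [Group G] (Γ : SimpleGraph V) (ρ : G →* Equiv.Perm V)
    (hconn : Γ.Connected)
    (hadj : ∀ (g : G) (u v : V), Γ.Adj u v → Γ.Adj (ρ g u) (ρ g v))
    (hfin : ∀ v : V, (Γ.neighborSet v).Finite)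
    (p : ℕ) (hp : p.Prime) (hd : ∀ v : V, (Γ.neighborSet v).ncard ≤ p) (W : Subgroup G)
    (a b : V) (hab : Γ.Adj a b) (ha : W ≤ stabV ρ a) (hb : W ≤ stabV ρ b) (F : Finset V) :
      ∃ H' : Subgroup G, H' ≤ W ∧ ¬ p ∣ H'.relIndex W ∧ ∀ x ∈ F, H' ≤ stabV ρ x := by
  classical
  induction F using Finset.induction_on with
  | empty => exact ⟨W, le_rfl, by simpa using hp.one_lt.ne', by simp⟩
  | insert x F hx ih =>
    obtain ⟨H, h1, h2, h3⟩ := ih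
    obtain ⟨w⟩ := hconn.preconnected a x
    obtain ⟨H', h4, h5, h6⟩ := good_walk Γ ρ hadj hfin p hp hd W w b H hab h1 h2
      (h1.trans ha) (h1.trans hb)
    refine ⟨H', h4.trans h1, h5, ?_⟩
    intro y hy
    rcases Finset.mem_insert.1 hy with rfl | hy
    · exact h6
    · exact h4.trans (h3 y hy)

/-- Let `G` be a compactly generated t.d.l.c. group, `g ∈ G` and `p` a prime dividing the
scale `s(g)`.  Then every Cayley–Abels graph for `G` has degree at least `p + 1`.
In particular, if `p` is the largest prime occurring as a factor of a value of the scale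
function then `md(G) ≥ p + 1`. -/
theorem prime_factor_of_scale_degree_bound {G V : Type*} [Group G] [TopologicalSpace G]
    [IsTopologicalGroup G] [T2Space G] [TotallyDisconnectedSpace G] [LocallyCompactSpace G]
    (hcg : ∃ S : Set G, IsCompact S ∧ Subgroup.closure S = ⊤)
    (g : G) (p : ℕ) (hp : p.Prime) (hdvd : p ∣ scaleOf G g)
    (Γ : SimpleGraph V) (ρ : G →* Equiv.Perm V) (hCA : IsCayleyAbels Γ ρ) :
    ∀ v : V, p + 1 ≤ (Γ.neighborSet v).ncard := by
  obtain ⟨hconn, hfin, hadj, htrans, hst⟩ := hCA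
  intro v
  by_contra hlt
  have hlt : (Γ.neighborSet v).ncard ≤ p := by omega
  have hstc : ∀ x, IsCompact (stabV ρ x : Set G) := fun x => (hst x).1
  have hsto : ∀ x, IsOpen (stabV ρ x : Set G) := fun x => (hst x).2
  have hstcl : ∀ x, IsClosed (stabV ρ x : Set G) := fun x =>
    Subgroup.isClosed_of_isOpen _ (hsto x)
  have hker : (ρ.ker : Set G) = ⋂ x, (stabV ρ x : Set G) := by
    ext h
    simp only [SetLike.mem_coe, MonoidHom.mem_ker, Set.mem_iInter, mem_stabV]
    exact ⟨fun hh x => by rw [hh]; rfl, fun hh => Equiv.ext hh⟩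
  have hK : IsCompact (ρ.ker : Set G) := by
    refine (hstc v).of_isClosed_subset ?_ ?_
    · rw [hker]
      exact isClosed_iInter hstcl
    · rw [hker]
      exact Set.iInter_subset _ v
  obtain ⟨U, hUc, hUo, hKU, hmin⟩ := exists_minimizing ρ hK g ⟨stabV ρ v, hstc v, hsto v⟩
  have hpos : scaleOf G g ≠ 0 := by
    rw [← hmin]
    exact relIndex_ne_zero_of_open _ _ (conj_open g U hUo) hUc
  have hd : ∀ a : V, (Γ.neighborSet a).ncard ≤ p := by
    intro a
    obtain ⟨h, rfl⟩ := htrans a v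
    refine le_trans ?_ hlt
    exact Set.ncard_le_ncard_of_injOn (ρ h) (fun x hx => hadj h a x hx)
      (ρ h).injective.injOn (hfin _)
  by_cases hiso : ∃ b, Γ.Adj v b
  · obtain ⟨b, hb⟩ := hiso
    let W : Subgroup G := U ⊓ (stabV ρ v ⊓ stabV ρ b)
    have hWo : IsOpen (W : Set G) := hUo.inter ((hsto v).inter (hsto b))
    have hWc : IsCompact (W : Set G) :=
      hUc.of_isClosed_subset (Subgroup.isClosed_of_isOpen _ hWo) inf_le_left
    have key : ∀ O : Subgroup G, IsOpen (O : Set G) → ρ.ker ≤ O → ¬ p ∣ O.relIndex W := by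
      intro O hO hKO
      obtain ⟨F, hF⟩ := (hWc.diff hO).elim_finite_subfamily_closed
        (fun x => (stabV ρ x : Set G)) hstcl (by
          rw [← hker]
          ext y
          simp only [Set.mem_inter_iff, Set.mem_diff, Set.mem_empty_iff_false, iff_false]
          rintro ⟨⟨_, h1⟩, h2⟩
          exact h1 (hKO h2))
      obtain ⟨H, h1, h2, h3⟩ := good_finset Γ ρ hconn hadj hfin p hp hd W v b hb
        (inf_le_right.trans inf_le_left) (inf_le_right.trans inf_le_right) F
      have hHO : H ≤ O := by
        intro y hy
        by_contra hyO
        have : y ∈ (∅ : Set G) := by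
          rw [← hF]
          exact ⟨⟨h1 hy, hyO⟩, Set.mem_iInter₂.2 fun x hx => h3 x hx hy⟩
        exact this
      exact fun h => h2 (h.trans (Subgroup.relIndex_dvd_of_le_left W hHO))
    have hWU : W.relIndex U ≠ 0 := relIndex_ne_zero_of_open _ _ hWo hUc
    let n := W.relIndex U
    have h1 : p ^ n ∣ (chainV g U n).relIndex U := by
      rw [chainV_index g U hUo hUc hmin]
      exact pow_dvd_pow_of_dvd hdvd n
    have h2 : (chainV g U n).relIndex U ∣ (chainV g U n).relIndex W * W.relIndex U := by
      rw [← Subgroup.inf_relIndex_right (chainV g U n) W,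
        Subgroup.relIndex_mul_relIndex _ _ _ inf_le_right inf_le_left]
      exact Subgroup.relIndex_dvd_of_le_left U inf_le_left
    have h3 := key (chainV g U n) (chainV_open g U hUo n) (normal_le_chainV g _ U hKU n)
    have h4 : p ^ n ∣ W.relIndex U :=
      (((hp.coprime_iff_not_dvd).2 h3).pow_left n).dvd_of_dvd_mul_left (h1.trans h2)
    have h5 := Nat.le_of_dvd (Nat.pos_of_ne_zero hWU) h4
    exact absurd (Nat.lt_pow_self hp.one_lt (n := n)) (not_lt.2 h5)
  · push Not at hiso
    have hall : ∀ x, x = v := by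
      intro x
      obtain ⟨w⟩ := hconn.preconnected v x
      cases w with
      | nil => rfl
      | cons h _ => exact absurd h (hiso _)
    have htop : stabV ρ v = ⊤ := by
      rw [eq_top_iff]
      intro h _
      exact hall _
    have hle : scaleOf G g ≤ 1 := by
      apply Nat.sInf_le
      refine ⟨stabV ρ v, hstc v, hsto v, ?_⟩
      symm
      rw [Subgroup.relIndex_eq_one, htop]
      intro x _
      exact ⟨g * x * g⁻¹, trivial, by simp [mul_assoc]⟩
    have := Nat.le_of_dvd (Nat.pos_of_ne_zero hpos) hdvd
    have := hp.one_lt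
    omega
end

section
/- Let G be a compactly generated t.d.l.c. group. Then G has a compact open normal subgroup if and only if there exists a Cayley–Abels graph Γ for G on which the action of G is discrete, i.e., the kernel of the action of G on the vertices of Γ is an open subgroup of G (equivalently, vertex stabilizers of the induced permutation group on the vertices are finite). -/
universe u

theorem aux_locConst {G W : Type*} [Group G] [TopologicalSpace G] [IsTopologicalGroup G] [Group W]
    (φ : G →* W) (h : IsOpen (φ.ker : Set G)) (S : Set G) (hS : IsCompact S) :
    (φ '' S).Finite := by
  let : TopologicalSpace W := ⊥
  have : DiscreteTopology W := ⟨rfl⟩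
  have hc : Continuous φ := by
    refine continuous_of_continuousAt_one φ ?_
    rw [ContinuousAt, map_one, nhds_discrete W]
    rw [Filter.tendsto_pure]
    exact h.mem_nhds (one_mem φ.ker)
  exact (hS.image hc).finite_of_discrete

theorem aux_small {G : Type*} [Group G] [TopologicalSpace G] [IsTopologicalGroup G]
    (hcg : ∃ S : Set G, IsCompact S ∧ Subgroup.closure S = ⊤)
    (K : Subgroup G) [K.Normal] (hK : IsOpen (K : Set G)) : Countable (G ⧸ K) := by
  obtain ⟨S, hS, hcl⟩ := hcg
  have hf := aux_locConst (QuotientGroup.mk' K) (by simpa using hK) S hS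
  have h2 : Subgroup.closure (QuotientGroup.mk' K '' S) = ⊤ := by
    rw [← MonoidHom.map_closure, hcl, ← MonoidHom.range_eq_map,
      MonoidHom.range_eq_top]
    exact QuotientGroup.mk'_surjective K
  have : Group.FG (G ⧸ K) := Group.fg_iff.2 ⟨_, h2, hf⟩
  obtain ⟨α, hα, f, hs⟩ := Group.fg_iff_exists_freeGroup_hom_surjective_finite.1 this
  exact hs.countable

def auxGraph {W : Type*} [Group W] (T : Set W) : SimpleGraph W :=
  SimpleGraph.fromRel (fun x y => x⁻¹ * y ∈ T)

/-- A compactly generated t.d.l.c. group `G` has a compact open normal subgroup if and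
only if there is a Cayley–Abels graph for `G` on which the action of `G` is discrete,
i.e. the kernel of the action on the vertices is an open subgroup of `G`. -/
theorem nearly_discrete_iff_discrete_action_on_CayleyAbels
    (G : Type*) [Group G] [TopologicalSpace G]
    [IsTopologicalGroup G] [T2Space G] [TotallyDisconnectedSpace G] [LocallyCompactSpace G]
    (hcg : ∃ S : Set G, IsCompact S ∧ Subgroup.closure S = ⊤) :
    (∃ K : Subgroup G, K.Normal ∧ IsCompact (K : Set G) ∧ IsOpen (K : Set G)) ↔
      (∃ (W : Type u) (Γ : SimpleGraph W) (σ : G →* Equiv.Perm W),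
        IsCayleyAbels Γ σ ∧ IsOpen (σ.ker : Set G)) := by
  constructor
  · rintro ⟨K, hN, hKc, hKo⟩
    have := aux_small hcg K hKo
    obtain ⟨W, hW, φ, hφ, hker⟩ : ∃ (W : Type u) (_ : Group W) (φ : G →* W),
        Function.Surjective φ ∧ φ.ker = K := by
      refine ⟨Shrink.{u} (G ⧸ K), inferInstance,
        (Shrink.mulEquiv.{u} (α := G ⧸ K)).symm.toMonoidHom.comp (QuotientGroup.mk' K), ?_, ?_⟩
      · exact (Shrink.mulEquiv.{u} (α := G ⧸ K)).symm.surjective.comp (QuotientGroup.mk'_surjective K)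
      · ext g
        simp
    obtain ⟨S, hS, hcl⟩ := hcg
    have hf := aux_locConst φ (by rw [hker]; exact hKo) S hS
    have h2 : Subgroup.closure (φ '' S) = ⊤ := by
      rw [← MonoidHom.map_closure, hcl, ← MonoidHom.range_eq_map, MonoidHom.range_eq_top]
      exact hφ
    generalize φ '' S = T at hf h2
    have hmem : ∀ g, g ∈ K ↔ φ g = 1 := fun g => by rw [← hker, MonoidHom.mem_ker]
    refine ⟨W, auxGraph T, (MulAction.toPermHom W W).comp φ, ⟨?_, ?_, ?_, ?_, ?_⟩, ?_⟩
    · have key : ∀ t ∈ Subgroup.closure T, ∀ x, (auxGraph T).Reachable x (x * t) := by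
        intro t ht
        induction ht using Subgroup.closure_induction with
        | mem t ht =>
          intro x
          by_cases h : x = x * t
          · rw [← h]
          · exact SimpleGraph.Adj.reachable (by
              rw [auxGraph, SimpleGraph.fromRel_adj]
              exact ⟨h, Or.inl (by simpa using ht)⟩)
        | one => intro x; simp
        | mul a b _ _ ha hb =>
          intro x
          rw [← mul_assoc]
          exact (ha x).trans (hb _)
        | inv a _ ha =>
          intro x
          simpa using (ha (x * a⁻¹)).symm
      have : Nonempty W := ⟨1⟩
      refine ⟨fun x y => ?_⟩
      simpa using key (x⁻¹ * y) (by rw [h2]; trivial) x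
    · intro v
      refine ((hf.image (fun t => v * t)).union (hf.image (fun t => v * t⁻¹))).subset ?_
      intro y hy
      rw [SimpleGraph.mem_neighborSet, auxGraph, SimpleGraph.fromRel_adj] at hy
      rcases hy.2 with h | h
      · exact Or.inl ⟨_, h, by simp⟩
      · exact Or.inr ⟨_, h, by simp⟩
    · intro g x y h
      rw [auxGraph, SimpleGraph.fromRel_adj] at h ⊢
      simpa [mul_assoc] using h
    · intro x y
      obtain ⟨g, hg⟩ := hφ (y * x⁻¹)
      exact ⟨g, by simp [hg]⟩
    · intro v
      have : {g : G | ((MulAction.toPermHom W W).comp φ) g v = v} = K := by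
        ext g
        simp [hmem]
      rw [this]
      exact ⟨hKc, hKo⟩
    · have : ((MulAction.toPermHom W W).comp φ).ker = K := by
        ext g
        rw [hmem, MonoidHom.mem_ker]
        constructor
        · intro h
          simpa using congrArg (fun f : Equiv.Perm W => f 1) h
        · intro h
          rw [MonoidHom.comp_apply, h, map_one]
      rw [this]
      exact hKo
  · rintro ⟨W, Γ, σ, ⟨hc, -, -, -, hst⟩, ho⟩
    obtain ⟨v⟩ := hc.nonempty
    refine ⟨σ.ker, inferInstance, ?_, ho⟩
    refine (hst v).1.of_isClosed_subset (Subgroup.isClosed_of_isOpen _ ho) ?_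
    intro g hg
    have : σ g = 1 := hg
    simp [this]
end

section
/- Let G be a t.d.l.c. group and let Γ be a Cayley–Abels graph for G. (i) If the local action of G on Γ is trivial, i.e., for every vertex α each element of the stabilizer G_α fixes every neighbour of α, then every element of a vertex stabilizer fixes every vertex of Γ (the induced permutation group on the vertices acts regularly). (ii) If the local action of G on Γ is free, i.e., for every vertex α each element of G_α that fixes some neighbour of α fixes every neighbour of α, then every element of G fixing two adjacent vertices of Γ fixes every vertex of Γ (the induced permutation group acts freely on the arcs of Γ). In either case the action of G on Γ is discrete: the kernel of the action is open in G. -/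
/-- Let `G` be a t.d.l.c. group and `Γ` a Cayley–Abels graph for `G`.
(i) If the local action of `G` on `Γ` is trivial, then the induced permutation group acts
regularly: every element of a vertex stabilizer fixes every vertex; (ii) if the local
action is free, then every element of `G` fixing two adjacent vertices fixes every vertex
(the induced permutation group acts freely on arcs).  In either case the action is
discrete: the kernel of the action is an open subgroup of `G`. -/
theorem trivial_or_free_local_action_discrete {G V : Type*} [Group G] [TopologicalSpace G]
    [IsTopologicalGroup G] [T2Space G] [TotallyDisconnectedSpace G] [LocallyCompactSpace G]
    (Γ : SimpleGraph V) (ρ : G →* Equiv.Perm V) (hCA : IsCayleyAbels Γ ρ) :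
    ((∀ (α : V) (g : G), ρ g α = α → ∀ β ∈ Γ.neighborSet α, ρ g β = β) →
      ((∀ (α : V) (g : G), ρ g α = α → ∀ v : V, ρ g v = v) ∧
        IsOpen (ρ.ker : Set G))) ∧
    ((∀ (α : V) (g : G), ρ g α = α → (∃ β ∈ Γ.neighborSet α, ρ g β = β) →
        ∀ β ∈ Γ.neighborSet α, ρ g β = β) →
      ((∀ (g : G) (α β : V), Γ.Adj α β → ρ g α = α → ρ g β = β → ∀ v : V, ρ g v = v) ∧
        IsOpen (ρ.ker : Set G))) := by
  obtain ⟨hconn, -, -, -, hst⟩ := hCA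
  -- propagation along walks
  have key : ∀ (P : V → Prop), (∀ a b, Γ.Adj a b → P a → P b) → ∀ a, P a → ∀ v, P v := by
    intro P hP a ha v
    obtain ⟨w⟩ := hconn.preconnected a v
    induction w with
    | nil => exact ha
    | cons h _ ih => exact ih (hP _ _ h ha)
  have hker : ∀ g : G, g ∈ (ρ.ker : Set G) ↔ ∀ v, ρ g v = v := by
    intro g
    rw [SetLike.mem_coe, MonoidHom.mem_ker, Equiv.ext_iff]
    rfl
  obtain ⟨a⟩ := hconn.nonempty
  constructor
  · intro hloc
    have h1 : ∀ (α : V) (g : G), ρ g α = α → ∀ v : V, ρ g v = v := by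
      intro α g hg
      exact key (fun v => ρ g v = v) (fun x y hxy hx => hloc x g hx y hxy) α hg
    refine ⟨h1, ?_⟩
    have : (ρ.ker : Set G) = {g : G | ρ g a = a} := by
      ext g
      rw [hker]
      exact ⟨fun h => h a, fun h => h1 a g h⟩
    rw [this]
    exact (hst a).2
  · intro hloc
    have h1 : ∀ (g : G) (α β : V), Γ.Adj α β → ρ g α = α → ρ g β = β →
        ∀ v : V, ρ g v = v := by
      intro g α β hab ha hb v
      have := key (fun v => ρ g v = v ∧ ∃ u ∈ Γ.neighborSet v, ρ g u = u)
        (fun x y hxy hx => ⟨hloc x g hx.1 hx.2 y hxy, x, hxy.symm, hx.1⟩)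
        α ⟨ha, β, hab, hb⟩ v
      exact this.1
    refine ⟨h1, ?_⟩
    by_cases hE : ∃ b, Γ.Adj a b
    · obtain ⟨b, hab⟩ := hE
      have : (ρ.ker : Set G) = {g : G | ρ g a = a} ∩ {g : G | ρ g b = b} := by
        ext g
        rw [hker]
        exact ⟨fun h => ⟨h a, h b⟩, fun h => h1 g a b hab h.1 h.2⟩
      rw [this]
      exact (hst a).2.inter (hst b).2
    · -- no edges at `a`, so `a` is the only vertex
      have hall : ∀ v, v = a := key (fun v => v = a)
        (fun x y hxy hx => (hE ⟨y, hx ▸ hxy⟩).elim) a rfl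
      have : (ρ.ker : Set G) = {g : G | ρ g a = a} := by
        ext g
        rw [hker]
        exact ⟨fun h => h a, fun h v => by rw [hall v]; exact h⟩
      rw [this]
      exact (hst a).2
end
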